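/- Under the stated setup and assumptions, for every p ∈ [1,∞] the error of projecting the best rank-k part satisfies ‖(I − QQ*)A_k‖_p ≤ γ_k^{2q}·‖Σ_⊥Ω_2Ω_1†‖_p in the Schatten-p norm, where A_k = U_k·Σ_k·V_k* is the best rank-k approximation of A. -/

import Mathlib

open scoped ENNReal
open Matrix

/-- The `j`-th largest singular value (0-indexed) of a complex matrix,
obtained as the decreasingly sorted square roots of the eigenvalues of `Mᴴ * M`. -/
noncomputable def sval {m n : ℕ} (M : Matrix (Fin m) (Fin n) ℂ) (j : ℕ) : ℝ :=
  (List.insertionSort (· ≥ ·)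
    ((List.ofFn (Matrix.isHermitian_conjTranspose_mul_self M).eigenvalues).map Real.sqrt)).getD j 0

/-- The Schatten-`p` norm (`p = ∞` gives the spectral norm). -/
noncomputable def schatten {m n : ℕ} (p : ℝ≥0∞) (M : Matrix (Fin m) (Fin n) ℂ) : ℝ :=
  if p = ⊤ then sval M 0
  else (∑ j ∈ Finset.range n, sval M j ^ p.toReal) ^ (1 / p.toReal)

/-- Moore–Penrose pseudoinverse of a full-row-rank matrix. -/
noncomputable def rpinv {a b : ℕ} (M : Matrix (Fin a) (Fin b) ℂ) : Matrix (Fin b) (Fin a) ℂ :=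
  Mᴴ * (M * Mᴴ)⁻¹

/-- Rectangular diagonal matrix with entries `σ (off), σ (off+1), …` on the diagonal. -/
noncomputable def diagRect (σ : ℕ → ℝ) (off a b : ℕ) : Matrix (Fin a) (Fin b) ℂ :=
  Matrix.of fun i j => if (i : ℕ) = (j : ℕ) then (σ (off + (i : ℕ)) : ℂ) else 0

/-- The first `b` columns of a matrix with `b + c` columns. -/
def colsL {a b c : ℕ} (M : Matrix (Fin a) (Fin (b + c)) ℂ) : Matrix (Fin a) (Fin b) ℂ :=
  M.submatrix id (Fin.castAdd c)

/-- The last `c` columns of a matrix with `b + c` columns. -/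
def colsR {a b c : ℕ} (M : Matrix (Fin a) (Fin (b + c)) ℂ) : Matrix (Fin a) (Fin c) ℂ :=
  M.submatrix id (Fin.natAdd b)

open Module

section SingularValues

variable {E F E' F' : Type*}
  [NormedAddCommGroup E] [InnerProductSpace ℂ E] [FiniteDimensional ℂ E]
  [NormedAddCommGroup F] [InnerProductSpace ℂ F] [FiniteDimensional ℂ F]
  [NormedAddCommGroup E'] [InnerProductSpace ℂ E'] [FiniteDimensional ℂ E']
  [NormedAddCommGroup F'] [InnerProductSpace ℂ F'] [FiniteDimensional ℂ F']

/-- An orthonormal basis of right singular vectors computes `‖T x‖ ^ 2`. -/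
theorem exists_basis_norm_sq_apply_eq_sum (T : E →ₗ[ℂ] F) :
    ∃ b : OrthonormalBasis (Fin (finrank ℂ E)) ℂ E, ∀ x,
      ‖T x‖ ^ 2 = ∑ i : Fin (finrank ℂ E), T.singularValues i ^ 2 * ‖inner ℂ (b i) x‖ ^ 2 := by
  refine ⟨T.isSymmetric_adjoint_comp_self.eigenvectorBasis rfl, fun x => ?_⟩
  set b := T.isSymmetric_adjoint_comp_self.eigenvectorBasis rfl with hb
  have key : ∀ i, inner ℂ (b i) ((T.adjoint ∘ₗ T) x)
      = ((T.singularValues i ^ 2 : ℝ) : ℂ) * inner ℂ (b i) x := by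
    intro i
    rw [← T.isSymmetric_adjoint_comp_self (b i) x, hb,
      T.isSymmetric_adjoint_comp_self.apply_eigenvectorBasis, inner_smul_left,
      T.sq_singularValues_fin rfl]
    simp
  have h : inner ℂ x ((T.adjoint ∘ₗ T) x)
      = ((∑ i : Fin (finrank ℂ E), T.singularValues i ^ 2 * ‖inner ℂ (b i) x‖ ^ 2 : ℝ) : ℂ) := by
    rw [← b.sum_inner_mul_inner]
    rw [Complex.ofReal_sum]
    refine Finset.sum_congr rfl fun i _ => ?_
    rw [key, Complex.ofReal_mul, Complex.ofReal_pow ‖_‖, ← inner_conj_symm x (b i), ← Complex.conj_mul']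
    ring
  rw [LinearMap.comp_apply, LinearMap.adjoint_inner_right, inner_self_eq_norm_sq_to_K] at h
  rw [← Complex.ofReal_inj, ← h]
  simp

/-- Vanishing against `#S` vectors cuts the dimension by at most `#S`. -/
theorem finrank_le_finrank_orthogonal_add_card {ι : Type*} (b : ι → E) (S : Finset ι) :
    finrank ℂ E ≤ finrank ℂ (Submodule.span ℂ (b '' S))ᗮ + S.card := by
  classical
  have h := (Submodule.span ℂ (b '' S)).finrank_add_finrank_orthogonal
  have h' := finrank_span_finset_le_card (R := ℂ) (S.image b)
  rw [Set.finrank, Finset.coe_image] at h'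
  have := Finset.card_image_le (s := S) (f := b)
  omega

/-- The min-max subspace attaining a singular value. -/
theorem exists_submodule_norm_apply_le_singularValues (T : E →ₗ[ℂ] F) (j : ℕ) :
    ∃ W : Submodule ℂ E, finrank ℂ E ≤ finrank ℂ W + j ∧
      ∀ x ∈ W, ‖T x‖ ≤ T.singularValues j * ‖x‖ := by
  obtain ⟨b, hb⟩ := exists_basis_norm_sq_apply_eq_sum T
  set S : Finset (Fin (finrank ℂ E)) := {i | (i : ℕ) < j} with hS
  refine ⟨(Submodule.span ℂ (b '' S))ᗮ, (finrank_le_finrank_orthogonal_add_card b S).trans ?_, fun x hx => ?_⟩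
  · have : S.card ≤ j := by
      simpa using Finset.card_le_card_of_injOn (t := Finset.range j) (Fin.val : Fin (finrank ℂ E) → ℕ)
        (s := S) (by simp [hS, Set.MapsTo]) Fin.val_injective.injOn
    omega
  · have hj := T.singularValues_nonneg j
    refine abs_le_of_sq_le_sq' ?_ (by positivity) |>.2
    rw [hb, mul_pow, ← b.sum_sq_norm_inner_right x, Finset.mul_sum]
    refine Finset.sum_le_sum fun i _ => ?_
    by_cases hi : (i : ℕ) < j
    · have : inner ℂ (b i) x = 0 :=
        hx _ (Submodule.subset_span ⟨i, by simpa [hS] using hi, rfl⟩)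
      simp [this]
    · have := T.singularValues_antitone (not_lt.1 hi)
      have := T.singularValues_nonneg i
      gcongr

/-- The upper bound in the min-max principle for singular values. -/
theorem singularValues_le_of_submodule (T : E →ₗ[ℂ] F) (j : ℕ) {t : ℝ} (ht : 0 ≤ t)
    (W : Submodule ℂ E) (hW : finrank ℂ E ≤ finrank ℂ W + j)
    (h : ∀ x ∈ W, ‖T x‖ ≤ t * ‖x‖) : T.singularValues j ≤ t := by
  by_cases hj : finrank ℂ E ≤ j
  · rwa [T.singularValues_of_finrank_le hj]
  push Not at hj
  obtain ⟨b, hb⟩ := exists_basis_norm_sq_apply_eq_sum T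
  set S : Finset (Fin (finrank ℂ E)) := Finset.Ioi ⟨j, hj⟩ with hS
  set K := (Submodule.span ℂ (b '' S))ᗮ with hK
  have hKdim : finrank ℂ E ≤ finrank ℂ K + S.card := finrank_le_finrank_orthogonal_add_card b S
  rw [hS, Fin.card_Ioi] at hKdim
  simp only at hKdim
  have hdim := Submodule.finrank_sup_add_finrank_inf_eq W K
  have hsup := Submodule.finrank_le (W ⊔ K)
  have hne : W ⊓ K ≠ ⊥ := by
    intro h0
    rw [h0, finrank_bot] at hdim
    omega
  obtain ⟨x, ⟨hxW, hxK⟩, hx0⟩ := Submodule.exists_mem_ne_zero_of_ne_bot hne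
  have hx := norm_pos_iff.2 hx0
  have hnn := T.singularValues_nonneg j
  have hle : (T.singularValues j * ‖x‖) ^ 2 ≤ ‖T x‖ ^ 2 := by
    rw [hb, mul_pow, ← b.sum_sq_norm_inner_right x, Finset.mul_sum]
    refine Finset.sum_le_sum fun i _ => ?_
    by_cases hi : j < (i : ℕ)
    · have : inner ℂ (b i) x = 0 :=
        hxK _ (Submodule.subset_span ⟨i, by simpa [hS, Fin.lt_def] using hi, rfl⟩)
      simp [this]
    · have := T.singularValues_antitone (not_lt.1 hi)
      gcongr
  have := (abs_le_of_sq_le_sq' hle (norm_nonneg _)).2.trans (h x hxW)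
  exact le_of_mul_le_mul_right this hx

/-- Preimages do not increase codimension. -/
theorem finrank_le_finrank_comap_add (Z : E' →ₗ[ℂ] E) (W : Submodule ℂ E) (j : ℕ)
    (hW : finrank ℂ E ≤ finrank ℂ W + j) :
    finrank ℂ E' ≤ finrank ℂ (W.comap Z) + j := by
  have h1 := LinearMap.finrank_range_add_finrank_ker (W.mkQ ∘ₗ Z)
  rw [LinearMap.ker_comp, Submodule.ker_mkQ] at h1
  have h2 := Submodule.finrank_le (LinearMap.range (W.mkQ ∘ₗ Z))
  have h3 := W.finrank_quotient_add_finrank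
  omega

theorem singularValues_comp_comp_le (X : F →ₗ[ℂ] F') (T : E →ₗ[ℂ] F) (Z : E' →ₗ[ℂ] E)
    {a c : ℝ} (ha : 0 ≤ a) (hc : 0 ≤ c) (hX : ∀ x, ‖X x‖ ≤ a * ‖x‖)
    (hZ : ∀ x, ‖Z x‖ ≤ c * ‖x‖) (j : ℕ) :
    (X ∘ₗ T ∘ₗ Z).singularValues j ≤ a * c * T.singularValues j := by
  obtain ⟨W, hWdim, hW⟩ := exists_submodule_norm_apply_le_singularValues T j
  have hj := T.singularValues_nonneg j
  refine singularValues_le_of_submodule _ j (by positivity) (W.comap Z)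
    (finrank_le_finrank_comap_add Z W j hWdim) fun x hx => ?_
  calc ‖X (T (Z x))‖ ≤ a * ‖T (Z x)‖ := hX _
    _ ≤ a * (T.singularValues j * ‖Z x‖) := by gcongr; exact hW _ hx
    _ ≤ a * (T.singularValues j * (c * ‖x‖)) := by gcongr; exact hZ x
    _ = a * c * T.singularValues j * ‖x‖ := by ring

end SingularValues

theorem sval_eq_singularValues {m n : ℕ} (M : Matrix (Fin m) (Fin n) ℂ) (j : ℕ) :
    sval M j = (toEuclideanLin M).singularValues j := by
  set T := toEuclideanLin M with hT
  have hn : finrank ℂ (EuclideanSpace ℂ (Fin n)) = Fintype.card (Fin n) := finrank_euclideanSpace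
  have hcomp : toEuclideanLin (Mᴴ * M) = T.adjoint ∘ₗ T := by
    rw [hT, ← toEuclideanLin_conjTranspose_eq_adjoint]
    ext x
    simp
  set H := isHermitian_conjTranspose_mul_self M with hH
  have h0 : ∀ i, √(H.eigenvalues₀ i) = T.singularValues i := by
    intro i
    rw [T.singularValues_fin hn]
    unfold IsHermitian.eigenvalues₀
    congr 2
  have hlist : List.insertionSort (· ≥ ·) ((List.ofFn H.eigenvalues).map Real.sqrt)
      = List.ofFn fun i : Fin n => T.singularValues i := by
    refine List.Perm.eq_of_pairwise' (List.pairwise_insertionSort _ _) ?_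
      ((List.perm_insertionSort _ _).trans ?_)
    · rw [← List.sortedGE_iff_pairwise]
      exact Antitone.sortedGE_ofFn fun i i' h => T.singularValues_antitone h
    · rw [List.map_ofFn]
      let e : Fin n ≃ Fin n :=
        (Fintype.equivOfCardEq (Fintype.card_fin _)).symm.trans (finCongr (Fintype.card_fin n))
      have : (Real.sqrt ∘ H.eigenvalues) = (fun i : Fin n => T.singularValues i) ∘ e := by
        funext i
        simp only [Function.comp_apply, IsHermitian.eigenvalues, h0]
        rfl
      rw [this]
      exact Equiv.Perm.ofFn_comp_perm e _
  rw [sval, hlist]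
  by_cases hj : j < n
  · simp [List.getD_eq_getElem?_getD, hj]
  · rw [T.singularValues_of_finrank_le (by simpa using hj)]
    simp [List.getD_eq_getElem?_getD, hj]

theorem sval_nonneg {m n : ℕ} (M : Matrix (Fin m) (Fin n) ℂ) (j : ℕ) : 0 ≤ sval M j := by
  rw [sval_eq_singularValues]
  exact LinearMap.singularValues_nonneg _ j

theorem sval_eq_zero_of_le {m n : ℕ} (M : Matrix (Fin m) (Fin n) ℂ) {j : ℕ} (hj : n ≤ j) :
    sval M j = 0 := by
  rw [sval_eq_singularValues]
  exact LinearMap.singularValues_of_finrank_le _ (by simpa using hj)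

open scoped Matrix.Norms.L2Operator

theorem sval_mul_mul_le {l m n r : ℕ} (X : Matrix (Fin l) (Fin m) ℂ)
    (M : Matrix (Fin m) (Fin n) ℂ) (Z : Matrix (Fin n) (Fin r) ℂ) (j : ℕ) :
    sval (X * M * Z) j ≤ ‖X‖ * ‖Z‖ * sval M j := by
  have h : toEuclideanLin (X * M * Z)
      = toEuclideanLin X ∘ₗ toEuclideanLin M ∘ₗ toEuclideanLin Z := by
    ext x
    simp
  rw [sval_eq_singularValues, sval_eq_singularValues, h]
  exact singularValues_comp_comp_le _ _ _ (norm_nonneg _) (norm_nonneg _)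
    (fun x => X.l2_opNorm_mulVec x) (fun x => Z.l2_opNorm_mulVec x) j

theorem schatten_le_of_sval_le {l m n r : ℕ} {p : ℝ≥0∞} (hp : 1 ≤ p)
    (B : Matrix (Fin l) (Fin r) ℂ) (M : Matrix (Fin m) (Fin n) ℂ) {c : ℝ} (hc : 0 ≤ c)
    (h : ∀ j, sval B j ≤ c * sval M j) : schatten p B ≤ c * schatten p M := by
  unfold schatten
  split_ifs with hp'
  · exact h 0
  have hp0 : 0 < p.toReal :=
    ENNReal.toReal_pos (zero_lt_one.trans_le hp).ne' hp'
  have hM : ∀ j, 0 ≤ sval M j := sval_nonneg M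
  have hsum : ∑ j ∈ Finset.range r, sval B j ^ p.toReal
      ≤ c ^ p.toReal * ∑ j ∈ Finset.range n, sval M j ^ p.toReal := by
    rw [Finset.mul_sum]
    calc ∑ j ∈ Finset.range r, sval B j ^ p.toReal
        ≤ ∑ j ∈ Finset.range r, c ^ p.toReal * sval M j ^ p.toReal := by
          refine Finset.sum_le_sum fun j _ => ?_
          rw [← Real.mul_rpow hc (hM j)]
          exact Real.rpow_le_rpow (sval_nonneg B j) (h j) hp0.le
      _ ≤ ∑ j ∈ Finset.range (max r n), c ^ p.toReal * sval M j ^ p.toReal :=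
          Finset.sum_le_sum_of_subset_of_nonneg (by simp) fun j _ _ =>
            mul_nonneg (Real.rpow_nonneg hc _) (Real.rpow_nonneg (hM j) _)
      _ = ∑ j ∈ Finset.range n, c ^ p.toReal * sval M j ^ p.toReal := by
          refine (Finset.sum_subset (by simp) fun j _ hj => ?_).symm
          rw [sval_eq_zero_of_le M (by simpa using hj), Real.zero_rpow hp0.ne', mul_zero]
  have hS : 0 ≤ ∑ j ∈ Finset.range n, sval M j ^ p.toReal :=
    Finset.sum_nonneg fun j _ => Real.rpow_nonneg (hM j) _
  refine (Real.rpow_le_rpow (Finset.sum_nonneg fun j _ =>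
    Real.rpow_nonneg (sval_nonneg B j) _) hsum (by positivity)).trans_eq ?_
  rw [Real.mul_rpow (Real.rpow_nonneg hc _) hS, ← Real.rpow_mul hc,
    mul_one_div_cancel hp0.ne', Real.rpow_one]

theorem norm_le_one_of_conjTranspose_mul_self_eq_one {m n : ℕ} {W : Matrix (Fin m) (Fin n) ℂ}
    (hW : Wᴴ * W = 1) : ‖W‖ ≤ 1 := by
  have h := W.l2_opNorm_conjTranspose_mul_self
  have h1 : ‖(1 : Matrix (Fin n) (Fin n) ℂ)‖ ≤ 1 := by
    rw [← diagonal_one, l2_opNorm_diagonal]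
    exact (pi_norm_le_iff_of_nonneg zero_le_one).2 fun i => by simp
  rw [hW] at h
  nlinarith [norm_nonneg W]

theorem norm_one_sub_mul_conjTranspose_le_one {m n : ℕ} {Q : Matrix (Fin m) (Fin n) ℂ}
    (hQ : Qᴴ * Q = 1) : ‖1 - Q * Qᴴ‖ ≤ 1 := by
  have h := (1 - Q * Qᴴ).l2_opNorm_conjTranspose_mul_self
  have hP : (1 - Q * Qᴴ)ᴴ * (1 - Q * Qᴴ) = 1 - Q * Qᴴ := by
    have : Q * Qᴴ * (Q * Qᴴ) = Q * Qᴴ := by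
      rw [Matrix.mul_assoc, ← Matrix.mul_assoc Qᴴ, hQ, Matrix.one_mul]
    simp [mul_sub, sub_mul, this]
  rw [hP] at h
  by_contra! hlt
  nlinarith

section Columns

variable {a b c : ℕ} {M : Matrix (Fin a) (Fin (b + c)) ℂ}

theorem colsL_conjTranspose_mul_colsL (hM : Mᴴ * M = 1) : (colsL M)ᴴ * colsL M = 1 := by
  change (Mᴴ * M).submatrix (Fin.castAdd c) (Fin.castAdd c) = 1
  rw [hM, submatrix_one _ (Fin.castAdd_injective b c)]

theorem colsR_conjTranspose_mul_colsR (hM : Mᴴ * M = 1) : (colsR M)ᴴ * colsR M = 1 := by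
  change (Mᴴ * M).submatrix (Fin.natAdd b) (Fin.natAdd b) = 1
  rw [hM, submatrix_one _ (Fin.natAdd_injective c b)]

theorem colsL_conjTranspose_mul_colsR (hM : Mᴴ * M = 1) : (colsL M)ᴴ * colsR M = 0 := by
  change (Mᴴ * M).submatrix (Fin.castAdd c) (Fin.natAdd b) = 0
  rw [hM]
  ext i j
  rw [submatrix_apply, one_apply_ne (by simp [Fin.ext_iff]; omega), Matrix.zero_apply]

theorem colsR_conjTranspose_mul_colsL (hM : Mᴴ * M = 1) : (colsR M)ᴴ * colsL M = 0 := by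
  simpa using congrArg conjTranspose (colsL_conjTranspose_mul_colsR hM)

end Columns

theorem mul_diagRect_mul_conjTranspose {k m₂ n₂ a b : ℕ} (U : Matrix (Fin a) (Fin (k + m₂)) ℂ)
    (V : Matrix (Fin b) (Fin (k + n₂)) ℂ) (σ : ℕ → ℝ) :
    U * diagRect σ 0 (k + m₂) (k + n₂) * Vᴴ
      = colsL U * diagRect σ 0 k k * (colsL V)ᴴ
        + colsR U * diagRect σ k m₂ n₂ * (colsR V)ᴴ := by
  have hne (x : ℕ) (i : Fin k) : ¬ k + x = (i : ℕ) := by omega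
  have hne' (x : ℕ) (i : Fin k) : ¬ (i : ℕ) = k + x := by omega
  ext i j
  simp [mul_apply, Fin.sum_univ_add, diagRect, colsL, colsR, hne, hne']

theorem diagRect_mul_conjTranspose (σ : ℕ → ℝ) (off a b : ℕ) :
    diagRect σ off a b * (diagRect σ off a b)ᴴ
      = diagonal fun i : Fin a => if (i : ℕ) < b then ((σ (off + i) ^ 2 : ℝ) : ℂ) else 0 := by
  ext i j
  rw [mul_apply]
  by_cases hi : (i : ℕ) < b
  · rw [Finset.sum_eq_single ⟨i, hi⟩]
    · by_cases hij : i = j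
      · subst hij
        simp [diagRect, hi, sq]
      · have : ¬ (j : ℕ) = i := fun h => hij (Fin.ext h.symm)
        simp [diagRect, hij, this]
    · intro x _ hx
      have : ¬ (i : ℕ) = x := fun h => hx (Fin.ext h.symm)
      simp [diagRect, this]
    · simp
  · rw [Finset.sum_eq_zero]
    · simp [diagonal_apply, hi]
    · intro x _
      have : ¬ (i : ℕ) = x := by omega
      simp [diagRect, this]

theorem diagRect_square (σ : ℕ → ℝ) (off a : ℕ) :
    diagRect σ off a a = diagonal fun i : Fin a => (σ (off + i) : ℂ) := by
  ext i j
  simp [diagRect, diagonal_apply, Fin.ext_iff]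

/-- Power iterations act blockwise on a block singular value decomposition. -/
theorem pow_mul_conjTranspose_mul_self_of_blocks {m n k m₂ n₂ : ℕ} {A : Matrix (Fin m) (Fin n) ℂ}
    {U₁ : Matrix (Fin m) (Fin k) ℂ} {U₂ : Matrix (Fin m) (Fin m₂) ℂ}
    {V₁ : Matrix (Fin n) (Fin k) ℂ} {V₂ : Matrix (Fin n) (Fin n₂) ℂ}
    {D : Matrix (Fin k) (Fin k) ℂ} {S : Matrix (Fin m₂) (Fin n₂) ℂ}
    (hA : A = U₁ * D * V₁ᴴ + U₂ * S * V₂ᴴ)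
    (hU₁ : U₁ᴴ * U₁ = 1) (hU₂ : U₂ᴴ * U₂ = 1) (hU₁₂ : U₁ᴴ * U₂ = 0) (hU₂₁ : U₂ᴴ * U₁ = 0)
    (hV₁ : V₁ᴴ * V₁ = 1) (hV₂ : V₂ᴴ * V₂ = 1) (hV₁₂ : V₁ᴴ * V₂ = 0) (hV₂₁ : V₂ᴴ * V₁ = 0)
    (q : ℕ) :
    (A * Aᴴ) ^ q * A = U₁ * ((D * Dᴴ) ^ q * D) * V₁ᴴ + U₂ * ((S * Sᴴ) ^ q * S) * V₂ᴴ := by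
  have cancel {a b c d : ℕ} {X : Matrix (Fin a) (Fin b) ℂ} {Y : Matrix (Fin b) (Fin c) ℂ}
      {W : Matrix (Fin a) (Fin c) ℂ} (h : X * Y = W) (Z : Matrix (Fin c) (Fin d) ℂ) :
      X * (Y * Z) = W * Z := by rw [← Matrix.mul_assoc, h]
  have hAA : A * Aᴴ = U₁ * (D * Dᴴ) * U₁ᴴ + U₂ * (S * Sᴴ) * U₂ᴴ := by
    simp only [hA, conjTranspose_add, conjTranspose_mul, conjTranspose_conjTranspose,
      Matrix.mul_add, Matrix.add_mul, Matrix.mul_assoc, cancel hV₁, cancel hV₂, cancel hV₁₂,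
      cancel hV₂₁]
    simp
  induction q with
  | zero => simpa using hA
  | succ q ih =>
    rw [pow_succ', Matrix.mul_assoc, ih, hAA]
    simp only [Matrix.mul_add, Matrix.add_mul, Matrix.mul_assoc, cancel hU₁, cancel hU₂,
      cancel hU₁₂, cancel hU₂₁, pow_succ']
    simp

open scoped ComplexOrder in
theorem mul_rpinv_of_rank_eq {a b : ℕ} {M : Matrix (Fin a) (Fin b) ℂ} (hM : M.rank = a) :
    M * rpinv M = 1 := by
  have hr : (M * Mᴴ).rank = a := by rw [rank_self_mul_conjTranspose, hM]
  have hu : IsUnit (M * Mᴴ) := by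
    rw [← mulVec_surjective_iff_isUnit]
    have : LinearMap.range (M * Mᴴ).mulVecLin = ⊤ :=
      Submodule.eq_top_of_finrank_eq (by simpa [rank] using hr)
    exact LinearMap.range_eq_top.1 this
  rw [rpinv, ← Matrix.mul_assoc, mul_nonsing_inv _ ((isUnit_iff_isUnit_det _).1 hu)]

/-- The error of projecting the dominant block factors through the tail `S * N`. -/
theorem mul_dominant_block_eq {m n l k m₂ n₂ : ℕ} {P : Matrix (Fin m) (Fin m) ℂ}
    {U₁ : Matrix (Fin m) (Fin k) ℂ} {U₂ : Matrix (Fin m) (Fin m₂) ℂ}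
    {V₁ : Matrix (Fin n) (Fin k) ℂ} {V₂ : Matrix (Fin n) (Fin n₂) ℂ}
    {D D' E : Matrix (Fin k) (Fin k) ℂ} {T : Matrix (Fin m₂) (Fin m₂) ℂ}
    {S : Matrix (Fin m₂) (Fin n₂) ℂ} {Ω : Matrix (Fin n) (Fin l) ℂ} {G : Matrix (Fin l) (Fin k) ℂ}
    (hP : P * ((U₁ * D' * V₁ᴴ + U₂ * (T * S) * V₂ᴴ) * Ω) = 0)
    (hG : V₁ᴴ * Ω * G = 1) (hE : D' * E = D) :
    P * (U₁ * D * V₁ᴴ) = -(P * U₂ * T) * (S * (V₂ᴴ * Ω * G)) * (E * V₁ᴴ) := by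
  have h : P * U₁ * D' * (V₁ᴴ * Ω * G) + P * U₂ * T * (S * (V₂ᴴ * Ω * G)) = 0 := by
    have := congrArg (· * G) hP
    simpa only [Matrix.mul_add, Matrix.add_mul, Matrix.mul_assoc, Matrix.zero_mul] using this
  rw [hG, Matrix.mul_one] at h
  rw [Matrix.neg_mul, ← eq_neg_of_add_eq_zero_left h, ← hE]
  simp only [Matrix.mul_assoc]

theorem norm_diagonal_le {k : ℕ} {d : Fin k → ℂ} {c : ℝ} (hc : 0 ≤ c) (h : ∀ i, ‖d i‖ ≤ c) :
    ‖(diagonal d : Matrix (Fin k) (Fin k) ℂ)‖ ≤ c := by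
  rw [l2_opNorm_diagonal]
  exact (pi_norm_le_iff_of_nonneg hc).2 h

/-- Theorem 4.1, bound (4.2): projection error of the best rank-k part. -/
theorem lowrank_error_rank_k_schatten
    {k m₂ n₂ ρ : ℕ} (q : ℕ) (hk : 1 ≤ k)
    (A : Matrix (Fin (k + m₂)) (Fin (k + n₂)) ℂ)
    (U : Matrix (Fin (k + m₂)) (Fin (k + m₂)) ℂ)
    (V : Matrix (Fin (k + n₂)) (Fin (k + n₂)) ℂ)
    (σ : ℕ → ℝ)
    (hU : Uᴴ * U = 1) (hU' : U * Uᴴ = 1)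
    (hV : Vᴴ * V = 1) (hV' : V * Vᴴ = 1)
    (hσ0 : ∀ i, 0 ≤ σ i) (hσm : ∀ i j, i ≤ j → σ j ≤ σ i)
    (hA : A = U * diagRect σ 0 (k + m₂) (k + n₂) * Vᴴ)
    (hrank : 0 < σ (k - 1)) (hgap : σ k < σ (k - 1))
    (Ω : Matrix (Fin (k + n₂)) (Fin (k + ρ)) ℂ)
    (hΩ : ((colsL V)ᴴ * Ω).rank = k)
    (Q : Matrix (Fin (k + m₂)) (Fin (k + ρ)) ℂ)
    (R : Matrix (Fin (k + ρ)) (Fin (k + ρ)) ℂ)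
    (hQ : Qᴴ * Q = 1) (hR : R.BlockTriangular id)
    (hQR : (A * Aᴴ) ^ q * A * Ω = Q * R)
    :
    ∀ p : ℝ≥0∞, 1 ≤ p →
      schatten p ((1 - Q * Qᴴ) * (colsL U * diagRect σ 0 k k * (colsL V)ᴴ)) ≤
        (σ k / σ (k - 1)) ^ (2 * q) * schatten p (diagRect σ k m₂ n₂ * ((colsR V)ᴴ * Ω * rpinv ((colsL V)ᴴ * Ω))) := by
  intro p hp
  have hU₁ := colsL_conjTranspose_mul_colsL hU
  have hU₂ := colsR_conjTranspose_mul_colsR hU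
  have hV₁ := colsL_conjTranspose_mul_colsL hV
  have hY := pow_mul_conjTranspose_mul_self_of_blocks
    (hA.trans (mul_diagRect_mul_conjTranspose U V σ)) hU₁ hU₂
    (colsL_conjTranspose_mul_colsR hU) (colsR_conjTranspose_mul_colsL hU) hV₁
    (colsR_conjTranspose_mul_colsR hV) (colsL_conjTranspose_mul_colsR hV)
    (colsR_conjTranspose_mul_colsL hV) q
  have hP : (1 - Q * Qᴴ) * ((A * Aᴴ) ^ q * A * Ω) = 0 := by
    rw [hQR, ← Matrix.mul_assoc, Matrix.sub_mul, Matrix.mul_assoc Q, hQ]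
    simp
  rw [hY] at hP
  set γ := σ (k - 1)
  have hσ (i : Fin k) : γ ≤ σ i := hσm _ _ (by omega)
  have hσpos (i : Fin k) : 0 < σ i := hrank.trans_le (hσ i)
  let E : Matrix (Fin k) (Fin k) ℂ := diagonal fun i => (((σ i)⁻¹ ^ (2 * q) : ℝ) : ℂ)
  have hE : (diagRect σ 0 k k * (diagRect σ 0 k k)ᴴ) ^ q * diagRect σ 0 k k * E
      = diagRect σ 0 k k := by
    rw [diagRect_mul_conjTranspose, diagRect_square, diagonal_pow, diagonal_mul_diagonal,
      diagonal_mul_diagonal]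
    congr 1
    funext i
    have : (σ i : ℂ) ≠ 0 := by exact_mod_cast (hσpos i).ne'
    simp only [Fin.is_lt, if_true, zero_add, Pi.pow_apply]
    push_cast
    rw [← pow_mul, mul_right_comm, ← mul_pow, mul_inv_cancel₀ this, one_pow, one_mul]
  rw [mul_dominant_block_eq hP (mul_rpinv_of_rank_eq hΩ) hE]
  have hEnorm : ‖E‖ ≤ γ⁻¹ ^ (2 * q) := by
    refine norm_diagonal_le (by positivity) fun i => ?_
    have := hσpos i
    rw [Complex.norm_of_nonneg (by positivity)]
    gcongr
    exact hσ i
  have hTnorm : ‖(diagRect σ k m₂ n₂ * (diagRect σ k m₂ n₂)ᴴ) ^ q‖ ≤ σ k ^ (2 * q) := by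
    have := hσ0 k
    rw [diagRect_mul_conjTranspose, diagonal_pow]
    refine norm_diagonal_le (by positivity) fun i => ?_
    rw [Pi.pow_apply, norm_pow, pow_mul]
    gcongr
    split_ifs
    · rw [Complex.norm_of_nonneg (by positivity)]
      exact pow_le_pow_left₀ (hσ0 _) (hσm _ _ (by omega)) 2
    · rw [norm_zero]
      positivity
  have hX : ‖-((1 - Q * Qᴴ) * colsR U * (diagRect σ k m₂ n₂ * (diagRect σ k m₂ n₂)ᴴ) ^ q)‖
      ≤ σ k ^ (2 * q) := by
    rw [norm_neg]
    calc _ ≤ ‖1 - Q * Qᴴ‖ * ‖colsR U‖ * ‖_‖ :=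
          (l2_opNorm_mul _ _).trans (by gcongr; exact l2_opNorm_mul _ _)
      _ ≤ 1 * 1 * σ k ^ (2 * q) := by
          gcongr
          · exact norm_one_sub_mul_conjTranspose_le_one hQ
          · exact norm_le_one_of_conjTranspose_mul_self_eq_one hU₂
      _ = _ := by ring
  have hZ : ‖E * (colsL V)ᴴ‖ ≤ γ⁻¹ ^ (2 * q) := by
    calc _ ≤ ‖E‖ * ‖(colsL V)ᴴ‖ := l2_opNorm_mul _ _
      _ ≤ γ⁻¹ ^ (2 * q) * 1 := by
          gcongr
          rw [l2_opNorm_conjTranspose]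
          exact norm_le_one_of_conjTranspose_mul_self_eq_one hV₁
      _ = _ := mul_one _
  have hσk := hσ0 k
  refine schatten_le_of_sval_le hp _ _ (by positivity) fun j =>
    (sval_mul_mul_le _ _ _ j).trans ?_
  rw [div_eq_mul_inv, mul_pow]
  have := sval_nonneg (diagRect σ k m₂ n₂ * ((colsR V)ᴴ * Ω * rpinv ((colsL V)ᴴ * Ω))) j
  gcongr
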